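/- Let Λ ∈ P be J-dominant (⟨h_j,Λ⟩ ≥ 0 for all j ∈ J). The canonical map U_q^-(𝔤)/Σ_{j∈J} U_q^-(𝔤)f_j^{⟨h_j,Λ⟩+1} → V_J(Λ) is an isomorphism, where V_J(Λ) = U_q(𝔭_J)/(Σ_{j∈J}(U_q(𝔭_J)e_j + U_q(𝔭_J)f_j^{⟨h_j,Λ⟩+1}) + Σ_{h∈P^∨} U_q(𝔭_J)(q^h - q^{⟨h,Λ⟩})). -/

import Mathlib

noncomputable section

open scoped TensorProduct

/-- The field `ℚ(q)` of rational functions. -/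
abbrev KK : Type := RatFunc ℚ

/-- The indeterminate `q ∈ ℚ(q)`. -/
def qq : KK := RatFunc.X

/-- `q^m` for `m ∈ ℤ`. -/
def qpow (m : ℤ) : KK := qq ^ m

/-- The quantum integer `[n]_i = (q_i^n - q_i^{-n})/(q_i - q_i^{-1})` where `q_i = q^d`. -/
def qint (d n : ℤ) : KK := (qpow (d * n) - qpow (-(d * n))) / (qpow d - qpow (-d))

/-- The quantum factorial `[n]_i!`. -/
def qfact (d : ℤ) : ℕ → KK
  | 0 => 1
  | n + 1 => qfact d n * qint d (n + 1)

/-- A symmetrizable generalized Cartan matrix `a` with symmetrizers `d i`, so that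
`(α_i, α_j) = d i * a i j`. -/
structure CartanData (I : Type) : Type where
  a : I → I → ℤ
  d : I → ℤ
  d_pos : ∀ i, 0 < d i
  a_diag : ∀ i, a i i = 2
  a_offdiag : ∀ i j, i ≠ j → a i j ≤ 0
  symm : ∀ i j, d i * a i j = d j * a j i

/-- Generators of the quantum group `U_q(𝔤)` (adjoint form: `t i = q^{(α_i,α_i)/2 · h_i}`). -/
inductive QGen (I : Type) : Type
  | e : I → QGen I
  | f : I → QGen I
  | t : I → QGen I
  | tinv : I → QGen I

variable {I : Type}

/-- The free algebra on the generators of `U_q(𝔤)`. -/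
abbrev FA (I : Type) : Type := FreeAlgebra KK (QGen I)

def ge (i : I) : FA I := FreeAlgebra.ι KK (QGen.e i)
def gf (i : I) : FA I := FreeAlgebra.ι KK (QGen.f i)
def gT (i : I) : FA I := FreeAlgebra.ι KK (QGen.t i)
def gTinv (i : I) : FA I := FreeAlgebra.ι KK (QGen.tinv i)

/-- Divided power `e_i^{(s)}` in the free algebra. -/
def edp (C : CartanData I) (i : I) (s : ℕ) : FA I := (qfact (C.d i) s)⁻¹ • ge i ^ s

/-- Divided power `f_i^{(s)}` in the free algebra. -/
def fdp (C : CartanData I) (i : I) (s : ℕ) : FA I := (qfact (C.d i) s)⁻¹ • gf i ^ s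

/-- The quantum Serre element `Σ_{s} (-1)^s e_i^{(s)} e_j e_i^{(1-a_{ij}-s)}`. -/
def serreE (C : CartanData I) (i j : I) : FA I :=
  ∑ s ∈ Finset.range ((1 - C.a i j).toNat + 1),
    ((-1 : KK) ^ s) • (edp C i s * ge j * edp C i ((1 - C.a i j).toNat - s))

/-- The quantum Serre element `Σ_{s} (-1)^s f_i^{(s)} f_j f_i^{(1-a_{ij}-s)}`. -/
def serreF (C : CartanData I) (i j : I) : FA I :=
  ∑ s ∈ Finset.range ((1 - C.a i j).toNat + 1),
    ((-1 : KK) ^ s) • (fdp C i s * gf j * fdp C i ((1 - C.a i j).toNat - s))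

/-- The defining relations of the quantum group `U_q(𝔤)`. -/
inductive QRel [DecidableEq I] (C : CartanData I) : FA I → FA I → Prop
  | t_tinv (i : I) : QRel C (gT i * gTinv i) 1
  | tinv_t (i : I) : QRel C (gTinv i * gT i) 1
  | t_t (i j : I) : QRel C (gT i * gT j) (gT j * gT i)
  | t_tinv_comm (i j : I) : QRel C (gT i * gTinv j) (gTinv j * gT i)
  | t_e (i j : I) : QRel C (gT i * ge j) (qpow (C.d i * C.a i j) • (ge j * gT i))
  | t_f (i j : I) : QRel C (gT i * gf j) (qpow (-(C.d i * C.a i j)) • (gf j * gT i))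
  | e_f (i j : I) :
      QRel C (ge i * gf j - gf j * ge i)
        (if i = j then (qpow (C.d i) - qpow (-C.d i))⁻¹ • (gT i - gTinv i) else 0)
  | serre_e (i j : I) : i ≠ j → QRel C (serreE C i j) 0
  | serre_f (i j : I) : i ≠ j → QRel C (serreF C i j) 0

/-- The quantum group `U_q(𝔤)`, presented by generators and relations. -/
abbrev Uq [DecidableEq I] (C : CartanData I) : Type := RingQuot (QRel C)

variable [DecidableEq I]

/-- The canonical map from the free algebra onto `U_q(𝔤)`. -/
def uMk (C : CartanData I) : FA I →ₐ[KK] Uq C := RingQuot.mkAlgHom KK (QRel C)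

def uE (C : CartanData I) (i : I) : Uq C := uMk C (ge i)
def uF (C : CartanData I) (i : I) : Uq C := uMk C (gf i)
def uT (C : CartanData I) (i : I) : Uq C := uMk C (gT i)
def uTinv (C : CartanData I) (i : I) : Uq C := uMk C (gTinv i)

/-- Divided power `e_i^{(s)} ∈ U_q(𝔤)`. -/
def uEdp (C : CartanData I) (i : I) (s : ℕ) : Uq C := (qfact (C.d i) s)⁻¹ • uE C i ^ s

/-- Divided power `f_i^{(s)} ∈ U_q(𝔤)`. -/
def uFdp (C : CartanData I) (i : I) (s : ℕ) : Uq C := (qfact (C.d i) s)⁻¹ • uF C i ^ s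

/-- The negative half `U_q^-(𝔤)`, the subalgebra generated by the `f_i`. -/
def Uneg (C : CartanData I) : Subalgebra KK (Uq C) :=
  Algebra.adjoin KK (Set.range (uF C))

/-- The weight `-β` component of `U_q^-(𝔤)` (spanned by monomials in the `f_i` of
content `β ∈ Q_+`). -/
def negWt (C : CartanData I) (β : I →₀ ℕ) : Submodule KK (Uq C) :=
  Submodule.span KK
    {u | ∃ w : List I, (∀ j, w.count j = β j) ∧ u = (w.map (uF C)).prod}

/-- The pairing `(α_i, β) = Σ_j β_j (α_i, α_j)` for `β ∈ Q_+`. -/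
def pairB (C : CartanData I) (i : I) (β : I →₀ ℕ) : ℤ :=
  β.sum fun j m => C.d i * C.a i j * (m : ℤ)

/-- `f_j` as an element of the subalgebra `U_q^-(𝔤)`. -/
def uFneg (C : CartanData I) (j : I) : ↥(Uneg C) :=
  ⟨uF C j, Algebra.subset_adjoin ⟨j, rfl⟩⟩

/-- `t_i^m` for `m ∈ ℤ`. -/
def tpow (C : CartanData I) (i : I) (m : ℤ) : Uq C :=
  if 0 ≤ m then uT C i ^ m.toNat else uTinv C i ^ (-m).toNat

/-- Generators of the parabolic quantum group `U_q(𝔭_J)`: `e_j` only for `j ∈ J`. -/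
inductive QGenP (I : Type) (J : Set I) : Type
  | e : ↥J → QGenP I J
  | f : I → QGenP I J
  | t : I → QGenP I J
  | tinv : I → QGenP I J

/-- The free algebra on the generators of `U_q(𝔭_J)`. -/
abbrev FAP (I : Type) (J : Set I) : Type := FreeAlgebra KK (QGenP I J)

def pge (J : Set I) (j : ↥J) : FAP I J := FreeAlgebra.ι KK (QGenP.e j)
def pgf (J : Set I) (i : I) : FAP I J := FreeAlgebra.ι KK (QGenP.f i)
def pgT (J : Set I) (i : I) : FAP I J := FreeAlgebra.ι KK (QGenP.t i)
def pgTinv (J : Set I) (i : I) : FAP I J := FreeAlgebra.ι KK (QGenP.tinv i)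

def pedp (C : CartanData I) (J : Set I) (j : ↥J) (s : ℕ) : FAP I J :=
  (qfact (C.d j) s)⁻¹ • pge J j ^ s

def pfdp (C : CartanData I) (J : Set I) (i : I) (s : ℕ) : FAP I J :=
  (qfact (C.d i) s)⁻¹ • pgf J i ^ s

def pserreE (C : CartanData I) (J : Set I) (i j : ↥J) : FAP I J :=
  ∑ s ∈ Finset.range ((1 - C.a i j).toNat + 1),
    ((-1 : KK) ^ s) • (pedp C J i s * pge J j * pedp C J i ((1 - C.a i j).toNat - s))

def pserreF (C : CartanData I) (J : Set I) (i j : I) : FAP I J :=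
  ∑ s ∈ Finset.range ((1 - C.a i j).toNat + 1),
    ((-1 : KK) ^ s) • (pfdp C J i s * pgf J j * pfdp C J i ((1 - C.a i j).toNat - s))

/-- The defining relations of the parabolic quantum group `U_q(𝔭_J)`. -/
inductive QRelP [DecidableEq I] (C : CartanData I) (J : Set I) : FAP I J → FAP I J → Prop
  | t_tinv (i : I) : QRelP C J (pgT J i * pgTinv J i) 1
  | tinv_t (i : I) : QRelP C J (pgTinv J i * pgT J i) 1
  | t_t (i j : I) : QRelP C J (pgT J i * pgT J j) (pgT J j * pgT J i)
  | t_tinv_comm (i j : I) : QRelP C J (pgT J i * pgTinv J j) (pgTinv J j * pgT J i)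
  | t_e (i : I) (j : ↥J) :
      QRelP C J (pgT J i * pge J j) (qpow (C.d i * C.a i j) • (pge J j * pgT J i))
  | t_f (i j : I) :
      QRelP C J (pgT J i * pgf J j) (qpow (-(C.d i * C.a i j)) • (pgf J j * pgT J i))
  | e_f (i : ↥J) (j : I) :
      QRelP C J (pge J i * pgf J j - pgf J j * pge J i)
        (if (i : I) = j then
            (qpow (C.d i) - qpow (-C.d (i : I)))⁻¹ • (pgT J i - pgTinv J i)
          else 0)
  | serre_e (i j : ↥J) : (i : I) ≠ (j : I) → QRelP C J (pserreE C J i j) 0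
  | serre_f (i j : I) : i ≠ j → QRelP C J (pserreF C J i j) 0

/-- The parabolic quantum group `U_q(𝔭_J)`, presented by generators and relations. -/
abbrev UqP [DecidableEq I] (C : CartanData I) (J : Set I) : Type := RingQuot (QRelP C J)

def pMk (C : CartanData I) (J : Set I) : FAP I J →ₐ[KK] UqP C J :=
  RingQuot.mkAlgHom KK (QRelP C J)

def pE (C : CartanData I) (J : Set I) (j : ↥J) : UqP C J := pMk C J (pge J j)
def pF (C : CartanData I) (J : Set I) (i : I) : UqP C J := pMk C J (pgf J i)
def pT (C : CartanData I) (J : Set I) (i : I) : UqP C J := pMk C J (pgT J i)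
def pTinv (C : CartanData I) (J : Set I) (i : I) : UqP C J := pMk C J (pgTinv J i)

/-- `U_q^-(𝔭_J)`, the subalgebra of `U_q(𝔭_J)` generated by the `f_i`, `i ∈ I`. -/
def Pneg (C : CartanData I) (J : Set I) : Subalgebra KK (UqP C J) :=
  Algebra.adjoin KK (Set.range (pF C J))

/-- `U_q^0(𝔭_J)`, the subalgebra of `U_q(𝔭_J)` generated by the `q^h`. -/
def Pzero (C : CartanData I) (J : Set I) : Subalgebra KK (UqP C J) :=
  Algebra.adjoin KK (Set.range (pT C J) ∪ Set.range (pTinv C J))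

/-- `U_q^+(𝔭_J)`, the subalgebra of `U_q(𝔭_J)` generated by the `e_j`, `j ∈ J`. -/
def Ppos (C : CartanData I) (J : Set I) : Subalgebra KK (UqP C J) :=
  Algebra.adjoin KK (Set.range (pE C J))

/-- The multiplication map `U_q^-(𝔭_J) ⊗ U_q^0(𝔭_J) ⊗ U_q^+(𝔭_J) → U_q(𝔭_J)`,
`x ⊗ y ⊗ z ↦ xyz`. -/
def triMul (C : CartanData I) (J : Set I) :
    (↥(Pneg C J) ⊗[KK] ↥(Pzero C J)) ⊗[KK] ↥(Ppos C J) →ₗ[KK] UqP C J :=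
  (LinearMap.mul' KK (UqP C J)).comp
    (TensorProduct.map
      ((LinearMap.mul' KK (UqP C J)).comp
        (TensorProduct.map (Pneg C J).val.toLinearMap (Pzero C J).val.toLinearMap))
      (Ppos C J).val.toLinearMap)

/-- The generators of the defining left ideal of the `U_q(𝔭_J)`-module `V_J(Λ)`,
for a `J`-dominant weight `Λ` with `⟨h_i, Λ⟩ = lam i`. -/
def VJgens (C : CartanData I) (J : Set I) (lam : I → ℤ) : Set (UqP C J) :=
  {x | ∃ j : ↥J, x = pE C J j} ∪
  {x | ∃ j : ↥J, x = pF C J (j : I) ^ (lam (j : I) + 1).toNat} ∪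
  {x | ∃ i : I, x = pT C J i - qpow (C.d i * lam i) • 1} ∪
  {x | ∃ i : I, x = pTinv C J i - qpow (-(C.d i * lam i)) • 1}

/-- The defining left ideal of `V_J(Λ)`. -/
def VJideal (C : CartanData I) (J : Set I) (lam : I → ℤ) : Submodule (UqP C J) (UqP C J) :=
  Submodule.span (UqP C J) (VJgens C J lam)

/-- The left `U_q(𝔭_J)`-module
`V_J(Λ) = U_q(𝔭_J)/(Σ_{j∈J}(U_q(𝔭_J) e_j + U_q(𝔭_J) f_j^{⟨h_j,Λ⟩+1})
  + Σ_h U_q(𝔭_J)(q^h - q^{⟨h,Λ⟩}))`. -/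
abbrev VJmod (C : CartanData I) (J : Set I) (lam : I → ℤ) : Type :=
  UqP C J ⧸ VJideal C J lam

theorem qq_ne : qq ≠ 0 := RatFunc.X_ne_zero

theorem qpow_add (a b : ℤ) : qpow (a + b) = qpow a * qpow b := zpow_add₀ qq_ne a b

theorem qpow_ne (a : ℤ) : qpow a ≠ 0 := zpow_ne_zero a qq_ne

theorem qpow_zero : qpow 0 = 1 := zpow_zero _

theorem qpow_mul_neg (a : ℤ) : qpow a * qpow (-a) = 1 := by
  rw [← qpow_add, add_neg_cancel, qpow_zero]

theorem qq_pow_ne_one (n : ℕ) (hn : n ≠ 0) : qq ^ n ≠ 1 := by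
  intro h
  have h2 : (algebraMap (Polynomial ℚ) (RatFunc ℚ)) (Polynomial.X ^ n) =
      algebraMap (Polynomial ℚ) (RatFunc ℚ) 1 := by
    rw [map_pow, RatFunc.algebraMap_X, map_one]; exact h
  have h3 := RatFunc.algebraMap_injective ℚ h2
  have := congrArg Polynomial.natDegree h3
  simp at this
  exact hn this

theorem qpow_ne_one (a : ℤ) (ha : a ≠ 0) : qpow a ≠ 1 := by
  unfold qpow
  intro h
  obtain ⟨n, rfl | rfl⟩ := a.eq_nat_or_neg
  · rw [zpow_natCast] at h
    exact qq_pow_ne_one n (by simpa using ha) h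
  · rw [zpow_neg, zpow_natCast, inv_eq_one] at h
    exact qq_pow_ne_one n (by simpa using ha) h

theorem qpow_sub_ne (a : ℤ) (ha : a ≠ 0) : qpow a - qpow (-a) ≠ 0 := by
  intro h
  rw [sub_eq_zero] at h
  have : qpow (a + a) = 1 := by
    rw [qpow_add]; nth_rewrite 2 [h]; exact qpow_mul_neg a
  exact qpow_ne_one _ (by omega) this

theorem qint_mul (d n : ℤ) (hd : d ≠ 0) :
    qint d n * (qpow d - qpow (-d)) = qpow (d * n) - qpow (-(d * n)) := by
  unfold qint
  rw [div_mul_cancel₀ _ (qpow_sub_ne d hd)]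

theorem qint_ne (d n : ℤ) (hd : d ≠ 0) (hn : n ≠ 0) : qint d n ≠ 0 := by
  unfold qint
  exact div_ne_zero (qpow_sub_ne _ (mul_ne_zero hd hn)) (qpow_sub_ne d hd)

theorem qint_neg (d n : ℤ) : qint (-d) n = qint d n := by
  unfold qint
  rw [neg_neg, neg_mul, neg_neg, ← neg_sub (qpow (d*n)), ← neg_sub (qpow d), neg_div_neg_eq]

theorem qfact_neg (d : ℤ) (n : ℕ) : qfact (-d) n = qfact d n := by
  induction n with
  | zero => rfl
  | succ n ih => simp only [qfact, ih, qint_neg]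

theorem qfact_ne (d : ℤ) (hd : d ≠ 0) (n : ℕ) : qfact d n ≠ 0 := by
  induction n with
  | zero => simp [qfact]
  | succ n ih => exact mul_ne_zero ih (qint_ne _ _ hd (by omega))

theorem qint_id1 (d : ℤ) (hd : d ≠ 0) (m s : ℤ) :
    qint d m * qpow (d * s) - qpow (d * m) * qint d s = qint d (m - s) := by
  apply mul_right_cancel₀ (qpow_sub_ne d hd)
  have h1 := qint_mul d m hd
  have h2 := qint_mul d s hd
  have h3 := qint_mul d (m - s) hd
  rw [h3]
  have e1 : qpow (d * (m - s)) = qpow (d*m) * qpow (-(d*s)) := by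
    rw [← qpow_add]; congr 1; ring
  have e2 : qpow (-(d * (m - s))) = qpow (-(d*m)) * qpow (d*s) := by
    rw [← qpow_add]; congr 1; ring
  rw [e1, e2]
  linear_combination qpow (d*s) * h1 - qpow (d*m) * h2

theorem qint_id2 (d : ℤ) (hd : d ≠ 0) (n : ℤ) :
    qint d n * qpow (-(d * (n-1))) + qpow (-(2 * d * n)) = qint d (n+1) * qpow (-(d*n)) := by
  apply mul_right_cancel₀ (qpow_sub_ne d hd)
  have h1 := qint_mul d n hd
  have h3 := qint_mul d (n + 1) hd
  have e1 : qpow (d * (n+1)) = qpow (d*n) * qpow d := by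
    rw [← qpow_add]; congr 1; ring
  have e2 : qpow (-(d * (n+1))) = qpow (-(d*n)) * qpow (-d) := by
    rw [← qpow_add]; congr 1; ring
  have e3 : qpow (-(d * (n-1))) = qpow (-(d*n)) * qpow d := by
    rw [← qpow_add]; congr 1; ring
  have e4 : qpow (-(2 * d * n)) = qpow (-(d*n)) * qpow (-(d*n)) := by
    rw [← qpow_add]; congr 1; ring
  rw [e1, e2] at h3
  rw [e3, e4]
  linear_combination qpow (-(d*n)) * qpow d * h1 - qpow (-(d*n)) * h3

theorem qint_id3 (d : ℤ) (hd : d ≠ 0) (n : ℤ) :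
    qint d n * qpow (d * (n-1)) + qpow (2 * d * n) = qint d (n+1) * qpow (d*n) := by
  have := qint_id2 (-d) (neg_ne_zero.mpr hd) n
  simp only [qint_neg] at this
  convert this using 3 <;> ring_nf

/-- Partial sums of the alternating `q`-binomial sum. -/
theorem qsum_partial (d : ℤ) (hd : d ≠ 0) (m : ℕ) (hm : 1 ≤ m) (s : ℕ) (hs : s ≤ m) :
    ∑ r ∈ Finset.range s, (-1 : KK) ^ r * ((qfact d r)⁻¹ * (qfact d (m - r))⁻¹ *
      qpow (d * ((m - r : ℕ) * (m - 1)))) =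
    - (-1 : KK) ^ s * qpow (d * (m * (m - s : ℕ))) * qint d s * (qint d m)⁻¹ *
      (qfact d s)⁻¹ * (qfact d (m - s))⁻¹ := by
  induction s with
  | zero => simp [qint]
  | succ s ih =>
    rw [Finset.sum_range_succ, ih (by omega)]
    obtain ⟨n, rfl⟩ : ∃ n, m = s + n + 1 := ⟨m - s - 1, by omega⟩
    have a1 : s + n + 1 - s = n + 1 := by omega
    have a2 : s + n + 1 - (s + 1) = n := by omega
    rw [a1, a2]
    have k := qint_id1 d hd ((s + n + 1 : ℕ) : ℤ) s
    have a3 : ((s + n + 1 : ℕ) : ℤ) - s = n + 1 := by push_cast; ring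
    rw [a3] at k
    have f1 := qfact_ne d hd s
    have f2 := qfact_ne d hd n
    have f3 := qint_ne d ((s + n + 1 : ℕ) : ℤ) hd (by omega)
    have f4 := qint_ne d (s+1) hd (by omega)
    have f5 := qint_ne d (n+1) hd (by omega)
    have e1 : qpow (d * (((s + n + 1 : ℕ) : ℤ) * ((n + 1 : ℕ) : ℤ))) =
      qpow (d * (((s + n + 1 : ℕ) : ℤ) * n)) * qpow (d * ((s + n + 1 : ℕ) : ℤ)) := by
      rw [← qpow_add]; congr 1; push_cast; ring
    have e2 : qpow (d * (((n + 1 : ℕ) : ℤ) * (((s + n + 1 : ℕ) : ℤ) - 1))) =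
      qpow (d * (((s + n + 1 : ℕ) : ℤ) * n)) * qpow (d * (s : ℤ)) := by
      rw [← qpow_add]; congr 1; push_cast; ring
    rw [e1, e2]
    simp only [qfact]
    generalize qint d ((s + n + 1 : ℕ) : ℤ) = M at *
    generalize qpow (d * (((s + n + 1 : ℕ) : ℤ) * n)) = Q at *
    have e5 : qint d ((s + 1 : ℕ) : ℤ) = qint d (s + 1) := by push_cast; rfl
    rw [e5]
    rw [pow_succ]
    field_simp
    linear_combination Q * k

theorem qsum_zero (d : ℤ) (hd : d ≠ 0) (m : ℕ) (hm : 1 ≤ m) :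
    ∑ r ∈ Finset.range (m + 1), (-1 : KK) ^ r * ((qfact d r)⁻¹ * (qfact d (m - r))⁻¹ *
      qpow (d * ((m - r : ℕ) * (m - 1)))) = 0 := by
  rw [Finset.sum_range_succ, qsum_partial d hd m hm m le_rfl]
  have f3 := qint_ne d m hd (by omega)
  have f1 := qfact_ne d hd m
  simp [qpow_zero, qfact]
  field_simp
  ring

theorem smul_aux {K V : Type} [CommRing K] [AddCommGroup V] [Module K V]
    (c k a b c2 a2 b2 : K) (x y : V) :
    (c * k) • (a • x - b • y) + k • ((c2 * a2 - c * a) • x - (c2 * b2 - c * b) • y) =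
      (c2 * k) • (a2 • x - b2 • y) := by
  module

theorem smul_aux2 {K V : Type} [CommRing K] [AddCommGroup V] [Module K V]
    (c : K) (x y z : V) : x - c • y + c • (y + z) = x - (c * -1) • z := by
  module

section general
variable {B : Type} [Ring B] [Algebra KK B]

/-- Divided powers. -/
def dvp (d : ℤ) (X : B) (n : ℕ) : B := (qfact d n)⁻¹ • X ^ n

/-- The Serre element. -/
def serreG (d : ℤ) (m : ℕ) (X Y : B) : B :=
  ∑ s ∈ Finset.range (m + 1), ((-1 : KK) ^ s) • (dvp d X s * Y * dvp d X (m - s))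

theorem map_dvp {B' : Type} [Ring B'] [Algebra KK B'] (φ : B →ₐ[KK] B') (d : ℤ) (X : B) (n : ℕ) :
    φ (dvp d X n) = dvp d (φ X) n := by
  simp [dvp]

theorem map_serreG {B' : Type} [Ring B'] [Algebra KK B'] (φ : B →ₐ[KK] B') (d : ℤ) (m : ℕ)
    (X Y : B) : φ (serreG d m X Y) = serreG d m (φ X) (φ Y) := by
  simp [serreG, map_dvp]

theorem qcomm_pow (T X : B) (a : ℤ) (h : T * X = qpow a • (X * T)) (n : ℕ) :
    T * X ^ n = qpow (a * n) • (X ^ n * T) := by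
  induction n with
  | zero => simp [qpow_zero]
  | succ n ih =>
    rw [pow_succ, ← mul_assoc, ih, smul_mul_assoc, mul_assoc, h, mul_smul_comm, smul_smul,
      ← qpow_add, mul_assoc]
    congr 2; push_cast; ring

theorem qcomm_dvp (d : ℤ) (T X : B) (a : ℤ) (h : T * X = qpow a • (X * T)) (n : ℕ) :
    T * dvp d X n = qpow (a * n) • (dvp d X n * T) := by
  rw [dvp, mul_smul_comm, qcomm_pow T X a h, smul_mul_assoc, smul_comm]

theorem E_pow (d : ℤ) (hd : d ≠ 0) (E X T T' : B)
    (h1 : E * X - X * E = (qpow d - qpow (-d))⁻¹ • (T - T'))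
    (hT : T * X = qpow (-(2 * d)) • (X * T)) (hT' : T' * X = qpow (2 * d) • (X * T')) (n : ℕ) :
    E * X ^ (n+1) - X ^ (n+1) * E = (qint d (n+1) * (qpow d - qpow (-d))⁻¹) •
      (X ^ n * (qpow (-(d * n)) • T - qpow (d * n) • T')) := by
  induction n with
  | zero =>
    have : qint d 1 = 1 := by
      unfold qint; rw [mul_one]; exact div_self (qpow_sub_ne d hd)
    simp [qpow_zero, this, h1]
  | succ n ih =>
    have e1 : E * X ^ (n+1+1) - X ^ (n+1+1) * E =
      X * (E * X ^ (n+1) - X ^ (n+1) * E) + (E * X - X * E) * X ^ (n+1) := by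
      rw [pow_succ' X (n+1)]; noncomm_ring
    have k1 := qint_id2 d hd (n+1)
    have k2 := qint_id3 d hd (n+1)
    have e2 := qcomm_pow T X _ hT (n+1)
    have e3 := qcomm_pow T' X _ hT' (n+1)
    rw [e1, ih, h1, smul_mul_assoc, sub_mul, e2, e3, mul_smul_comm, ← mul_assoc, ← pow_succ']
    simp only [mul_sub, mul_smul_comm]
    push_cast
    have k1' : qpow (-(2 * d) * ((n:ℤ) + 1)) = qint d (n + 1 + 1) * qpow (-(d * (n+1))) -
        qint d (n+1) * qpow (-(d * n)) := by
      rw [← k1]; simp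
    have k2' : qpow ((2 * d) * ((n:ℤ) + 1)) = qint d (n + 1 + 1) * qpow ((d * (n+1))) -
        qint d (n+1) * qpow ((d * n)) := by
      rw [← k2]; simp
    rw [k1', k2']
    exact smul_aux ..

theorem E_dvp (d : ℤ) (hd : d ≠ 0) (E X T T' : B)
    (h1 : E * X - X * E = (qpow d - qpow (-d))⁻¹ • (T - T'))
    (hT : T * X = qpow (-(2 * d)) • (X * T)) (hT' : T' * X = qpow (2 * d) • (X * T')) (n : ℕ) :
    E * dvp d X (n+1) = dvp d X (n+1) * E + (qpow d - qpow (-d))⁻¹ •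
      (dvp d X n * (qpow (-(d * n)) • T - qpow (d * n) • T')) := by
  have h := E_pow d hd E X T T' h1 hT hT' n
  rw [sub_eq_iff_eq_add] at h
  simp only [dvp, mul_smul_comm, smul_mul_assoc]
  rw [h, smul_add, smul_smul, smul_smul, add_comm]
  congr 2
  have f1 := qfact_ne d hd n
  have f2 := qint_ne d (n+1) hd (by omega)
  simp only [qfact]
  field_simp

theorem serre_comm_other (d : ℤ) (m : ℕ) (E X Y : B) (hX : E * X = X * E) (hY : E * Y = Y * E) :
    E * serreG d m X Y = serreG d m X Y * E := by
  have hd : ∀ n, Commute E (dvp d X n) := fun n =>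
    (Commute.pow_right (show Commute E X from hX) n).smul_right _
  exact Commute.sum_right _ _ _ fun s _ =>
    (((hd s).mul_right (show Commute E Y from hY)).mul_right (hd _)).smul_right _

theorem serre_comm_j_aux (d : ℤ) (hd : d ≠ 0) (m : ℕ) (hm : 1 ≤ m) (X T : B)
    (hT : T * X = qpow (d * (m - 1)) • (X * T)) : serreG d m X T = 0 := by
  have : ∀ s ∈ Finset.range (m+1), ((-1 : KK) ^ s) • (dvp d X s * T * dvp d X (m - s)) =
      ((-1 : KK) ^ s * ((qfact d s)⁻¹ * (qfact d (m - s))⁻¹ *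
      qpow (d * ((m - s : ℕ) * (m - 1))))) • (X ^ m * T) := by
    intro s hs
    have hs' : s ≤ m := by simpa [Nat.lt_succ_iff] using hs
    rw [mul_assoc, qcomm_dvp d T X _ hT]
    simp only [dvp, mul_smul_comm, smul_mul_assoc, smul_smul]
    rw [← mul_assoc (X ^ s), ← pow_add, Nat.add_sub_cancel' hs']
    congr 1
    have : d * (((m - s : ℕ) : ℤ) * (m - 1)) = d * (m - 1) * (m - s : ℕ) := by ring
    rw [this]; ring
  rw [serreG, Finset.sum_congr rfl this, ← Finset.sum_smul, qsum_zero d hd m hm, zero_smul]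

theorem serreG_neg (d : ℤ) (m : ℕ) (X Y : B) : serreG (-d) m X Y = serreG d m X Y := by
  simp [serreG, dvp, qfact_neg]

theorem serre_comm_j (d : ℤ) (hd : d ≠ 0) (m : ℕ) (hm : 1 ≤ m) (E X Y T T' : B) (κ : KK)
    (hX : E * X = X * E) (hY : E * Y - Y * E = κ • (T - T'))
    (hT : T * X = qpow (d * (m - 1)) • (X * T))
    (hT' : T' * X = qpow (-(d * (m - 1))) • (X * T')) :
    E * serreG d m X Y = serreG d m X Y * E := by
  have hc : ∀ n, E * dvp d X n = dvp d X n * E := fun n =>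
    ((Commute.pow_right (show Commute E X from hX) n).smul_right _ : Commute E (dvp d X n))
  have e0 : E * serreG d m X Y - serreG d m X Y * E =
      κ • (serreG d m X T - serreG d m X T') := by
    simp only [serreG, Finset.mul_sum, Finset.sum_mul, ← Finset.sum_sub_distrib, Finset.smul_sum]
    refine Finset.sum_congr rfl fun s _ => ?_
    have : E * (dvp d X s * Y * dvp d X (m - s)) - (dvp d X s * Y * dvp d X (m - s)) * E =
        dvp d X s * (E * Y - Y * E) * dvp d X (m - s) := by
      rw [mul_assoc _ _ E, ← hc, mul_assoc, mul_assoc, ← mul_assoc E, hc]; noncomm_ring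
    rw [mul_smul_comm, smul_mul_assoc, ← smul_sub, this, hY, ← smul_sub, smul_comm]
    simp only [mul_smul_comm, smul_mul_assoc, mul_sub, sub_mul, smul_sub]
  have e2 : serreG d m X T' = 0 := by
    rw [← serreG_neg]
    apply serre_comm_j_aux (-d) (neg_ne_zero.mpr hd) m hm
    rw [hT', neg_mul]
  rw [serre_comm_j_aux d hd m hm X T hT, e2, sub_zero, smul_zero] at e0
  exact sub_eq_zero.mp e0

theorem alt_sum (m : ℕ) (H : ℕ → B) :
    ∑ s ∈ Finset.range m, ((-1 : KK) ^ s) • (H s + H (s+1)) = H 0 - ((-1 : KK) ^ m) • H m := by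
  induction m with
  | zero => simp
  | succ m ih => rw [Finset.sum_range_succ, ih, pow_succ]; exact smul_aux2 ((-1 : KK) ^ m) (H 0) (H m) (H (m+1))

theorem serre_comm_i (d : ℤ) (hd : d ≠ 0) (m : ℕ) (E X Y T T' : B)
    (hY : E * Y = Y * E) (h1 : E * X - X * E = (qpow d - qpow (-d))⁻¹ • (T - T'))
    (hT : T * X = qpow (-(2 * d)) • (X * T)) (hT' : T' * X = qpow (2 * d) • (X * T'))
    (hTY : T * Y = qpow (d * (m - 1)) • (Y * T))
    (hTY' : T' * Y = qpow (-(d * (m - 1))) • (Y * T')) :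
    E * serreG d m X Y = serreG d m X Y * E := by
  set κ := (qpow d - qpow (-d))⁻¹ with hκ
  have hE := E_dvp d hd E X T T' h1 hT hT'
  rw [← hκ] at hE
  -- the contribution of the right factor
  let H : ℕ → B := fun s => match s with
    | 0 => 0
    | s+1 => if s < m then κ • (dvp d X s * Y * dvp d X (m - s - 1) *
        (qpow (-(d * (m - s - 1 : ℕ))) • T - qpow (d * (m - s - 1 : ℕ)) • T')) else 0
  have h0 : H 0 = 0 := rfl
  have hm1 : H (m+1) = 0 := by simp [H]
  have hA : ∀ s, s ≤ m → E * dvp d X s * Y * dvp d X (m - s) =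
      dvp d X s * E * Y * dvp d X (m - s) + H s := by
    intro s hs
    cases s with
    | zero => simp [h0, dvp]
    | succ s =>
      rw [hE s]
      obtain ⟨n, rfl⟩ : ∃ n, m = s + n + 1 := ⟨m - s - 1, by omega⟩
      have a1 : s + n + 1 - s - 1 = n := by omega
      have a2 : s + n + 1 - (s + 1) = n := by omega
      have a3 : s < s + n + 1 := by omega
      simp only [H, a1, a2, if_pos a3]
      rw [add_mul, add_mul]
      congr 1
      have t1 : T * Y * dvp d X n = qpow (d * (s + n) - 2 * d * n) • (Y * dvp d X n * T) := by
        rw [hTY, smul_mul_assoc, mul_assoc, qcomm_dvp d T X _ hT, mul_smul_comm, smul_smul,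
          ← qpow_add, ← mul_assoc]
        congr 2; push_cast; ring
      have t2 : T' * Y * dvp d X n =
          qpow (-(d * (s + n) - 2 * d * n)) • (Y * dvp d X n * T') := by
        rw [hTY', smul_mul_assoc, mul_assoc, qcomm_dvp d T' X _ hT', mul_smul_comm, smul_smul,
          ← qpow_add, ← mul_assoc]
        congr 2; push_cast; ring
      have t3 : (qpow (-(d * s)) • T - qpow (d * s) • T') * Y * dvp d X n =
          Y * dvp d X n * (qpow (-(d * n)) • T - qpow (d * n) • T') := by
        simp only [sub_mul, smul_mul_assoc, t1, t2, smul_smul, ← qpow_add, mul_sub, mul_smul_comm]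
        congr 3 <;> ring_nf
      rw [smul_mul_assoc, smul_mul_assoc, mul_assoc, mul_assoc, ← mul_assoc _ Y, t3]
      simp only [mul_assoc]
  have hB : ∀ s, s ≤ m → dvp d X s * Y * (E * dvp d X (m - s)) =
      dvp d X s * Y * (dvp d X (m - s) * E) + H (s+1) := by
    intro s hs
    by_cases h : s < m
    · obtain ⟨n, rfl⟩ : ∃ n, m = s + n + 1 := ⟨m - s - 1, by omega⟩
      have a1 : s + n + 1 - s - 1 = n := by omega
      have a2 : s + n + 1 - s = n + 1 := by omega
      have a3 : s < s + n + 1 := by omega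
      simp only [H, a2, if_pos a3, Nat.add_sub_cancel]
      rw [hE n, mul_add, mul_smul_comm, ← mul_assoc _ (dvp d X n)]
    · obtain rfl : s = m := by omega
      rw [hm1]; simp [dvp]
  have e0 : E * serreG d m X Y - serreG d m X Y * E =
      ∑ s ∈ Finset.range (m+1), ((-1 : KK) ^ s) • (H s + H (s+1)) := by
    simp only [serreG, Finset.mul_sum, Finset.sum_mul, ← Finset.sum_sub_distrib]
    refine Finset.sum_congr rfl fun s hs => ?_
    have hs' : s ≤ m := by simpa [Nat.lt_succ_iff] using hs
    rw [mul_smul_comm, smul_mul_assoc, ← smul_sub]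
    congr 1
    rw [← mul_assoc, ← mul_assoc, hA s hs', mul_assoc _ E Y, hY, ← mul_assoc, mul_assoc _ E,
      hB s hs']
    noncomm_ring
  rw [alt_sum, h0, hm1, smul_zero, sub_zero] at e0
  exact sub_eq_zero.mp e0

end general

/-- The free algebra on the `f_i`. -/
abbrev FF (I : Type) : Type := FreeAlgebra KK I

theorem FF_left_induction (S : Submodule KK (FF I)) (h1 : (1 : FF I) ∈ S)
    (hf : ∀ k, ∀ x ∈ S, FreeAlgebra.ι KK k * x ∈ S) (x : FF I) : x ∈ S := by
  have : ∀ x : FF I, ∀ s ∈ S, x * s ∈ S := by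
    intro x
    induction x using FreeAlgebra.induction with
    | grade0 r =>
      intro s hs
      rw [← Algebra.smul_def]; exact S.smul_mem r hs
    | grade1 k => exact hf k
    | mul a b ha hb =>
      intro s hs
      rw [mul_assoc]; exact ha _ (hb _ hs)
    | add a b ha hb =>
      intro s hs
      rw [add_mul]; exact S.add_mem (ha _ hs) (hb _ hs)
  simpa using this x 1 h1

/-- Two linear maps agreeing at `1` and with compatible behaviour agree. -/
theorem FF_ext {V : Type} [AddCommGroup V] [Module KK V] (f g : FF I →ₗ[KK] V)
    (h1 : f 1 = g 1) (hf : ∀ k x, f x = g x → f (FreeAlgebra.ι KK k * x) = g (FreeAlgebra.ι KK k * x)) :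
    f = g := by
  ext x
  exact FF_left_induction (LinearMap.eqLocus f g) h1 (fun k x hx => hf k x hx) x

/-- Scaling automorphism `f_j ↦ q^{c_j} f_j`. -/
def phi (c : I → ℤ) : FF I →ₐ[KK] FF I :=
  FreeAlgebra.lift KK fun j => qpow (c j) • FreeAlgebra.ι KK j

theorem phi_ι (c : I → ℤ) (j : I) :
    phi c (FreeAlgebra.ι KK j) = qpow (c j) • FreeAlgebra.ι KK j := by
  simp [phi]

/-- The operator `t_i` on the free Verma module. -/
def opT (C : CartanData I) (lam : I → ℤ) (i : I) : Module.End KK (FF I) :=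
  qpow (C.d i * lam i) • (phi fun j => -(C.d i * C.a i j)).toLinearMap

/-- The operator `t_i⁻¹` on the free Verma module. -/
def opTinv (C : CartanData I) (lam : I → ℤ) (i : I) : Module.End KK (FF I) :=
  qpow (-(C.d i * lam i)) • (phi fun j => C.d i * C.a i j).toLinearMap

/-- The operator `f_i`. -/
def opF (i : I) : Module.End KK (FF I) := LinearMap.mulLeft KK (FreeAlgebra.ι KK i)

/-- Auxiliary action used to define `e_k`. -/
def psiE (C : CartanData I) (lam : I → ℤ) (k : I) : FF I →ₐ[KK] Module.End KK (FF I × FF I) :=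
  FreeAlgebra.lift KK fun j =>
    LinearMap.prod ((opF j).comp (LinearMap.fst KK _ _))
      ((opF j).comp (LinearMap.snd KK _ _) +
        (if k = j then (qpow (C.d k) - qpow (-C.d k))⁻¹ • (opT C lam k - opTinv C lam k) else 0).comp
          (LinearMap.fst KK _ _))

/-- The operator `e_k`. -/
def opE (C : CartanData I) (lam : I → ℤ) (k : I) : Module.End KK (FF I) :=
  (LinearMap.snd KK _ _).comp
    ((LinearMap.applyₗ ((1, 0) : FF I × FF I)).comp (psiE C lam k).toLinearMap)

theorem psiE_fst (C : CartanData I) (lam : I → ℤ) (k : I) (x : FF I) :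
    ∀ p, (psiE C lam k x p).1 = x * p.1 := by
  induction x using FreeAlgebra.induction with
  | grade0 r => intro p; simp [Algebra.smul_def]
  | grade1 j => intro p; simp [psiE, opF]
  | mul a b ha hb => intro p; rw [map_mul, Module.End.mul_apply, ha, hb, mul_assoc]
  | add a b ha hb => intro p; simp [ha, hb, add_mul]

theorem opE_one (C : CartanData I) (lam : I → ℤ) (k : I) : opE C lam k 1 = 0 := by
  simp [opE]

theorem opE_ι_mul (C : CartanData I) (lam : I → ℤ) (k j : I) (x : FF I) :
    opE C lam k (FreeAlgebra.ι KK j * x) = FreeAlgebra.ι KK j * opE C lam k x +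
      (if k = j then (qpow (C.d k) - qpow (-C.d k))⁻¹ • (opT C lam k - opTinv C lam k) else 0 :
        Module.End KK (FF I)) x := by
  have h := psiE_fst C lam k x (1, 0)
  simp only [mul_one] at h
  simp only [opE, LinearMap.comp_apply, AlgHom.toLinearMap_apply, map_mul,
    LinearMap.applyₗ_apply_apply, Module.End.mul_apply, LinearMap.snd_apply]
  nth_rewrite 1 [psiE]
  rw [FreeAlgebra.lift_ι_apply]
  simp [opF, h]

theorem opE_opF (C : CartanData I) (lam : I → ℤ) (k j : I) :
    opE C lam k * opF j - opF j * opE C lam k =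
      if k = j then (qpow (C.d k) - qpow (-C.d k))⁻¹ • (opT C lam k - opTinv C lam k) else 0 := by
  apply LinearMap.ext
  intro x
  rw [LinearMap.sub_apply, Module.End.mul_apply, Module.End.mul_apply]
  simp only [opF, LinearMap.mulLeft_apply]
  rw [opE_ι_mul]
  abel

theorem opT_mul (C : CartanData I) (lam : I → ℤ) (i : I) (x y : FF I) :
    opT C lam i (x * y) = phi (fun j => -(C.d i * C.a i j)) x * opT C lam i y := by
  simp [opT]

theorem opTinv_mul (C : CartanData I) (lam : I → ℤ) (i : I) (x y : FF I) :
    opTinv C lam i (x * y) = phi (fun j => C.d i * C.a i j) x * opTinv C lam i y := by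
  simp [opTinv]

theorem opT_one (C : CartanData I) (lam : I → ℤ) (i : I) :
    opT C lam i 1 = qpow (C.d i * lam i) • 1 := by
  simp [opT]

theorem opTinv_one (C : CartanData I) (lam : I → ℤ) (i : I) :
    opTinv C lam i 1 = qpow (-(C.d i * lam i)) • 1 := by
  simp [opTinv]

theorem opT_opF (C : CartanData I) (lam : I → ℤ) (i j : I) :
    opT C lam i * opF j = qpow (-(C.d i * C.a i j)) • (opF j * opT C lam i) := by
  apply LinearMap.ext
  intro x
  simp [opF, opT_mul, phi_ι]

theorem opTinv_opF (C : CartanData I) (lam : I → ℤ) (i j : I) :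
    opTinv C lam i * opF j = qpow (C.d i * C.a i j) • (opF j * opTinv C lam i) := by
  apply LinearMap.ext
  intro x
  simp [opF, opTinv_mul, phi_ι]

theorem phi_comp (c c' : I → ℤ) (x : FF I) : phi c (phi c' x) = phi (fun j => c j + c' j) x := by
  have : (phi c).comp (phi c') = phi (fun j => c j + c' j) := by
    apply FreeAlgebra.hom_ext
    funext j
    simp [phi_ι, smul_smul, ← qpow_add, add_comm]
  rw [← this]; rfl

theorem phi_zero (x : FF I) : phi (fun _ : I => (0 : ℤ)) x = x := by
  have : phi (fun _ : I => (0 : ℤ)) = AlgHom.id KK _ := by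
    apply FreeAlgebra.hom_ext
    funext j
    simp [phi_ι, qpow_zero]
  rw [this]; rfl

theorem opT_opTinv (C : CartanData I) (lam : I → ℤ) (i : I) : opT C lam i * opTinv C lam i = 1 := by
  apply LinearMap.ext
  intro x
  simp [opT, opTinv, phi_comp, phi_zero, smul_smul, ← qpow_add, qpow_zero]

theorem opTinv_opT (C : CartanData I) (lam : I → ℤ) (i : I) : opTinv C lam i * opT C lam i = 1 := by
  apply LinearMap.ext
  intro x
  simp [opT, opTinv, phi_comp, phi_zero, smul_smul, ← qpow_add, qpow_zero]

theorem opT_comm (C : CartanData I) (lam : I → ℤ) (i j : I) :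
    opT C lam i * opT C lam j = opT C lam j * opT C lam i := by
  apply LinearMap.ext
  intro x
  simp [opT, phi_comp, smul_smul, add_comm, mul_comm]

theorem opT_opTinv_comm (C : CartanData I) (lam : I → ℤ) (i j : I) :
    opT C lam i * opTinv C lam j = opTinv C lam j * opT C lam i := by
  apply LinearMap.ext
  intro x
  simp [opT, opTinv, phi_comp, smul_smul, add_comm, mul_comm]

theorem opT_opE (C : CartanData I) (lam : I → ℤ) (i j : I) :
    opT C lam i * opE C lam j = qpow (C.d i * C.a i j) • (opE C lam j * opT C lam i) := by
  apply FF_ext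
  · simp [opE_one, opT_one]
  · intro k x hx
    simp only [Module.End.mul_apply, LinearMap.smul_apply] at hx ⊢
    rw [opE_ι_mul, map_add, opT_mul, opT_mul, hx, phi_ι, smul_mul_assoc, smul_mul_assoc, map_smul,
      opE_ι_mul]
    by_cases h : j = k
    · subst h
      have e1 : opT C lam i (opT C lam j x) = opT C lam j (opT C lam i x) :=
        LinearMap.congr_fun (opT_comm C lam i j) x
      have e2 : opT C lam i (opTinv C lam j x) = opTinv C lam j (opT C lam i x) :=
        LinearMap.congr_fun (opT_opTinv_comm C lam i j) x
      simp only [if_true, LinearMap.smul_apply, LinearMap.sub_apply, map_smul, map_sub, e1, e2,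
        smul_add, mul_smul_comm]
      congr 1
      · rw [smul_smul, smul_smul, mul_comm]
      · rw [smul_smul (qpow _), ← qpow_add, add_neg_cancel, qpow_zero, one_smul]
    · simp only [if_neg h, LinearMap.zero_apply, map_zero, add_zero, mul_smul_comm]
      rw [smul_comm]

theorem opTinv_opE (C : CartanData I) (lam : I → ℤ) (i j : I) :
    opTinv C lam i * opE C lam j = qpow (-(C.d i * C.a i j)) • (opE C lam j * opTinv C lam i) := by
  have h := opT_opE C lam i j
  have h2 : opTinv C lam i * (opT C lam i * opE C lam j) * opTinv C lam i =
      opTinv C lam i * (qpow (C.d i * C.a i j) • (opE C lam j * opT C lam i)) * opTinv C lam i := by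
    rw [h]
  rw [← mul_assoc, opTinv_opT, one_mul, mul_smul_comm, smul_mul_assoc, mul_assoc, mul_assoc,
    opT_opTinv, mul_one] at h2
  rw [h2, smul_smul, ← qpow_add, neg_add_cancel, qpow_zero, one_smul]

/-- `1 - a_{ij}` as a natural number. -/
abbrev mm (C : CartanData I) (i j : I) : ℕ := (1 - C.a i j).toNat

theorem mm_cast (C : CartanData I) (i j : I) (h : i ≠ j) :
    1 ≤ mm C i j ∧ C.d i * C.a i j = -(C.d i * ((mm C i j : ℤ) - 1)) := by
  have := C.a_offdiag i j h
  have e : ((mm C i j : ℕ) : ℤ) = 1 - C.a i j := Int.toNat_of_nonneg (by omega)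
  refine ⟨by omega, ?_⟩
  rw [e]; ring

/-- `e_k` commutes with the Serre elements in the `f`. -/
theorem opE_serreF (C : CartanData I) (lam : I → ℤ) (i j k : I) (hij : i ≠ j) :
    opE C lam k * serreG (C.d i) (mm C i j) (opF i) (opF j) =
      serreG (C.d i) (mm C i j) (opF i) (opF j) * opE C lam k := by
  obtain ⟨hm, he⟩ := mm_cast C i j hij
  have hd : C.d i ≠ 0 := (C.d_pos i).ne'
  have cf : ∀ l, k ≠ l → opE C lam k * opF l = opF l * opE C lam k := by
    intro l hl
    have := opE_opF C lam k l
    rw [if_neg hl] at this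
    exact sub_eq_zero.mp this
  have ct : opE C lam k * opF k - opF k * opE C lam k =
      (qpow (C.d k) - qpow (-C.d k))⁻¹ • (opT C lam k - opTinv C lam k) := by
    have := opE_opF C lam k k
    rwa [if_pos rfl] at this
  by_cases hki : k = i
  · subst hki
    apply serre_comm_i (C.d k) hd _ _ _ _ (opT C lam k) (opTinv C lam k) (cf j hij) ct
    · rw [opT_opF, C.a_diag, mul_comm]
    · rw [opTinv_opF, C.a_diag, mul_comm]
    · rw [opT_opF, he, neg_neg]
    · rw [opTinv_opF, he]
  · by_cases hkj : k = j
    · subst hkj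
      apply serre_comm_j (C.d i) hd _ hm _ _ _ (opT C lam k) (opTinv C lam k) _ (cf i hki) ct
      · rw [opT_opF, C.symm, he, neg_neg]
      · rw [opTinv_opF, C.symm, he]
    · exact serre_comm_other _ _ _ _ _ (cf i hki) (cf j hkj)

/-- `f_k` commutes with the Serre elements in the `e`. -/
theorem opF_serreE (C : CartanData I) (lam : I → ℤ) (i j k : I) (hij : i ≠ j) :
    opF k * serreG (C.d i) (mm C i j) (opE C lam i) (opE C lam j) =
      serreG (C.d i) (mm C i j) (opE C lam i) (opE C lam j) * opF k := by
  obtain ⟨hm, he⟩ := mm_cast C i j hij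
  have hd : C.d i ≠ 0 := (C.d_pos i).ne'
  have cf : ∀ l, k ≠ l → opF k * opE C lam l = opE C lam l * opF k := by
    intro l hl
    have := opE_opF C lam l k
    rw [if_neg hl.symm] at this
    exact (sub_eq_zero.mp this).symm
  have ct : opF k * opE C lam k - opE C lam k * opF k =
      (qpow (C.d k) - qpow (-C.d k))⁻¹ • (opTinv C lam k - opT C lam k) := by
    have := opE_opF C lam k k
    rw [if_pos rfl] at this
    rw [← neg_sub, this]; simp only [smul_sub, neg_sub]
  by_cases hki : k = i
  · subst hki
    apply serre_comm_i (C.d k) hd _ _ _ _ (opTinv C lam k) (opT C lam k) (cf j hij) ct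
    · rw [opTinv_opE, C.a_diag, mul_comm]
    · rw [opT_opE, C.a_diag, mul_comm]
    · rw [opTinv_opE, he, neg_neg]
    · rw [opT_opE, he]
  · by_cases hkj : k = j
    · subst hkj
      apply serre_comm_j (C.d i) hd _ hm _ _ _ (opTinv C lam k) (opT C lam k) _ (cf i hki) ct
      · rw [opTinv_opE, C.symm, he, neg_neg]
      · rw [opT_opE, C.symm, he]
    · exact serre_comm_other _ _ _ _ _ (cf i hki) (cf j hkj)

theorem opE_serreE (C : CartanData I) (lam : I → ℤ) (i j : I) (hij : i ≠ j) :
    serreG (C.d i) (mm C i j) (opE C lam i) (opE C lam j) = 0 := by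
  apply FF_ext
  · rw [LinearMap.zero_apply, serreG, LinearMap.sum_apply]
    apply Finset.sum_eq_zero
    intro s _
    have : (dvp (C.d i) (opE C lam i) s * opE C lam j * dvp (C.d i) (opE C lam i) (mm C i j - s)) 1
        = 0 := by
      rcases Nat.eq_zero_or_pos (mm C i j - s) with h | h
      · rw [h]
        simp [dvp, opE_one]
      · obtain ⟨n, hn⟩ : ∃ n, mm C i j - s = n + 1 := ⟨mm C i j - s - 1, by omega⟩
        rw [hn]
        simp [dvp, pow_succ, opE_one]
    rw [LinearMap.smul_apply, this, smul_zero]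
  · intro k x hx
    have := LinearMap.congr_fun (opF_serreE C lam i j k hij) x
    simp only [Module.End.mul_apply] at this
    rw [hx] at this
    simpa [opF] using this.symm

/-- `e_k` kills `f_j^{⟨h_j, Λ⟩+1}`. -/
theorem opE_pow (C : CartanData I) (lam : I → ℤ) (j k : I) (hj : 0 ≤ lam j) :
    opE C lam k (FreeAlgebra.ι KK j ^ (lam j + 1).toNat) = 0 := by
  obtain ⟨n, hn⟩ := Int.eq_ofNat_of_zero_le hj
  have hpow : ∀ n : ℕ, (FreeAlgebra.ι KK j ^ n : FF I) = (opF j ^ n : Module.End KK (FF I)) 1 := by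
    intro n
    simp [opF, LinearMap.pow_mulLeft]
  have hn1 : (lam j + 1).toNat = n + 1 := by omega
  rw [hn1, hpow, ← Module.End.mul_apply]
  by_cases h : k = j
  · subst h
    have ct : opE C lam k * opF k - opF k * opE C lam k =
        (qpow (C.d k) - qpow (-C.d k))⁻¹ • (opT C lam k - opTinv C lam k) := by
      have := opE_opF C lam k k
      rwa [if_pos rfl] at this
    have := E_pow (C.d k) (C.d_pos k).ne' (opE C lam k) (opF k) (opT C lam k) (opTinv C lam k) ct
      (by rw [opT_opF, C.a_diag, mul_comm]) (by rw [opTinv_opF, C.a_diag, mul_comm]) n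
    rw [sub_eq_iff_eq_add] at this
    rw [this]
    simp only [LinearMap.add_apply, LinearMap.smul_apply, Module.End.mul_apply, opE_one, map_zero,
      add_zero, LinearMap.sub_apply, opT_one, opTinv_one, hn, smul_smul, ← qpow_add]
    simp
  · have cf : Commute (opE C lam k) (opF j) := by
      have := opE_opF C lam k j
      rw [if_neg h] at this
      exact sub_eq_zero.mp this
    rw [(cf.pow_right (n+1)).eq, Module.End.mul_apply, opE_one, map_zero]

/-- Serre element in the free algebra on the `f_i`. -/
def SF (C : CartanData I) (i j : I) : FF I :=
  serreG (C.d i) (mm C i j) (FreeAlgebra.ι KK i) (FreeAlgebra.ι KK j)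

theorem SF_mul (C : CartanData I) (i j : I) (w : FF I) :
    SF C i j * w = (serreG (C.d i) (mm C i j) (opF i) (opF j) : Module.End KK (FF I)) w := by
  have := map_serreG (Algebra.lmul KK (FF I)) (C.d i) (mm C i j)
    (FreeAlgebra.ι KK i) (FreeAlgebra.ι KK j)
  exact LinearMap.congr_fun this w

/-- Generators of the left ideal. -/
def Kgens (C : CartanData I) (J : Set I) (lam : I → ℤ) : Set (FF I) :=
  {x | ∃ i j, i ≠ j ∧ ∃ w, x = SF C i j * w} ∪
  {x | ∃ j ∈ J, x = FreeAlgebra.ι KK j ^ (lam j + 1).toNat}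

/-- The left ideal of relations of the module. -/
def Kid (C : CartanData I) (J : Set I) (lam : I → ℤ) : Submodule (FF I) (FF I) :=
  Submodule.span (FF I) (Kgens C J lam)

theorem phi_SF (C : CartanData I) (c : I → ℤ) (i j : I) :
    phi c (SF C i j) = qpow (c j + mm C i j * c i) • SF C i j := by
  have h : ∀ n, phi c (dvp (C.d i) (FreeAlgebra.ι KK i) n) =
      qpow (n * c i) • dvp (C.d i) (FreeAlgebra.ι KK i) n := by
    intro n
    rw [map_dvp, phi_ι, dvp, dvp, smul_pow, smul_comm]
    congr 1
    unfold qpow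
    rw [← zpow_natCast, ← zpow_mul, mul_comm]
  rw [SF, serreG, map_sum, Finset.smul_sum]
  refine Finset.sum_congr rfl fun s hs => ?_
  have hs' : s ≤ mm C i j := by simpa [Nat.lt_succ_iff] using hs
  rw [map_smul, map_mul, map_mul, h, h, phi_ι, smul_comm]
  congr 1
  simp only [mul_smul_comm, smul_mul_assoc, smul_smul, ← qpow_add]
  congr 2
  rw [Nat.cast_sub hs']; ring

theorem phi_pow (c : I → ℤ) (j : I) (n : ℕ) :
    phi c (FreeAlgebra.ι KK j ^ n) = (qpow (c j) ^ n) • FreeAlgebra.ι KK j ^ n := by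
  rw [map_pow, phi_ι, smul_pow]

theorem Kid_smul (C : CartanData I) (J : Set I) (lam : I → ℤ) (r : KK) (x : FF I)
    (h : x ∈ Kid C J lam) : r • x ∈ Kid C J lam := by
  rw [Algebra.smul_def]; exact (Kid C J lam).smul_mem (algebraMap KK (FF I) r) h

theorem phi_Kid (C : CartanData I) (J : Set I) (lam : I → ℤ) (c : I → ℤ) (x : FF I)
    (hx : x ∈ Kid C J lam) : phi c x ∈ Kid C J lam := by
  induction hx using Submodule.span_induction with
  | mem x hx =>
    rcases hx with ⟨i, j, hij, w, rfl⟩ | ⟨j, hj, rfl⟩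
    · rw [map_mul, phi_SF, smul_mul_assoc]
      exact Kid_smul _ _ _ _ _ (Submodule.subset_span (Or.inl ⟨i, j, hij, _, rfl⟩))
    · rw [phi_pow]
      exact Kid_smul _ _ _ _ _ (Submodule.subset_span (Or.inr ⟨j, hj, rfl⟩))
  | zero => simp
  | add x y _ _ hx hy => rw [map_add]; exact add_mem hx hy
  | smul a x _ hx =>
    rw [smul_eq_mul, map_mul]; exact (Kid C J lam).smul_mem _ hx

theorem opT_Kid (C : CartanData I) (J : Set I) (lam : I → ℤ) (i : I) (x : FF I)
    (hx : x ∈ Kid C J lam) : opT C lam i x ∈ Kid C J lam :=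
  Kid_smul _ _ _ _ _ (phi_Kid _ _ _ _ _ hx)

theorem opTinv_Kid (C : CartanData I) (J : Set I) (lam : I → ℤ) (i : I) (x : FF I)
    (hx : x ∈ Kid C J lam) : opTinv C lam i x ∈ Kid C J lam :=
  Kid_smul _ _ _ _ _ (phi_Kid _ _ _ _ _ hx)

theorem opF_Kid (C : CartanData I) (J : Set I) (lam : I → ℤ) (i : I) (x : FF I)
    (hx : x ∈ Kid C J lam) : opF i x ∈ Kid C J lam :=
  (Kid C J lam).smul_mem (FreeAlgebra.ι KK i) hx

theorem opE_Kid (C : CartanData I) (J : Set I) (lam : I → ℤ) (hdom : ∀ j ∈ J, 0 ≤ lam j)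
    (k : I) (x : FF I) (hx : x ∈ Kid C J lam) : opE C lam k x ∈ Kid C J lam := by
  induction hx using Submodule.span_induction with
  | mem x hx =>
    rcases hx with ⟨i, j, hij, w, rfl⟩ | ⟨j, hj, rfl⟩
    · rw [SF_mul, ← Module.End.mul_apply, opE_serreF C lam i j k hij, Module.End.mul_apply,
        ← SF_mul]
      exact Submodule.subset_span (Or.inl ⟨i, j, hij, _, rfl⟩)
    · rw [opE_pow C lam j k (hdom j hj)]; exact zero_mem _
  | zero => simp
  | add x y _ _ hx hy => rw [map_add]; exact add_mem hx hy
  | smul a x hxK hx =>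
    rw [smul_eq_mul]
    have hxKid : x ∈ Kid C J lam := hxK
    clear hxK
    induction a using FreeAlgebra.induction generalizing x with
    | grade0 r => rw [← Algebra.smul_def, map_smul]; exact Kid_smul _ _ _ _ _ hx
    | grade1 j =>
      rw [opE_ι_mul]
      refine add_mem ((Kid C J lam).smul_mem _ hx) ?_
      split_ifs
      · exact Kid_smul _ _ _ _ _ (sub_mem (opT_Kid _ _ _ _ _ hxKid) (opTinv_Kid _ _ _ _ _ hxKid))
      · exact zero_mem _
    | mul a b ha hb =>
      rw [mul_assoc]
      exact ha _ (hb _ hx hxKid) ((Kid C J lam).smul_mem b hxKid)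
    | add a b ha hb =>
      rw [add_mul, map_add]; exact add_mem (ha _ hx hxKid) (hb _ hx hxKid)

/-- The action of the generators on the free Verma module. -/
def rhoGen (C : CartanData I) (J : Set I) (lam : I → ℤ) : QGenP I J → Module.End KK (FF I)
  | .e j => opE C lam j
  | .f i => opF i
  | .t i => opT C lam i
  | .tinv i => opTinv C lam i

/-- The action of the free algebra on the free Verma module. -/
def rho (C : CartanData I) (J : Set I) (lam : I → ℤ) : FAP I J →ₐ[KK] Module.End KK (FF I) :=
  FreeAlgebra.lift KK (rhoGen C J lam)

theorem rho_e (C : CartanData I) (J : Set I) (lam : I → ℤ) (j : J) :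
    rho C J lam (pge J j) = opE C lam j := by simp [rho, pge, rhoGen]
theorem rho_f (C : CartanData I) (J : Set I) (lam : I → ℤ) (j : I) :
    rho C J lam (pgf J j) = opF j := by simp [rho, pgf, rhoGen]
theorem rho_t (C : CartanData I) (J : Set I) (lam : I → ℤ) (j : I) :
    rho C J lam (pgT J j) = opT C lam j := by simp [rho, pgT, rhoGen]
theorem rho_t' (C : CartanData I) (J : Set I) (lam : I → ℤ) (j : I) :
    rho C J lam (pgTinv J j) = opTinv C lam j := by simp [rho, pgTinv, rhoGen]

/-- The left ideal as a `KK`-submodule. -/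
def Kr (C : CartanData I) (J : Set I) (lam : I → ℤ) : Submodule KK (FF I) :=
  (Kid C J lam).restrictScalars KK

theorem rhoGen_Kr (C : CartanData I) (J : Set I) (lam : I → ℤ) (hdom : ∀ j ∈ J, 0 ≤ lam j)
    (g : QGenP I J) : Kr C J lam ≤ (Kr C J lam).comap (rhoGen C J lam g) := by
  intro x hx
  cases g with
  | e j => exact opE_Kid C J lam hdom j x hx
  | f j => exact opF_Kid C J lam j x hx
  | t j => exact opT_Kid C J lam j x hx
  | tinv j => exact opTinv_Kid C J lam j x hx

/-- The action on the quotient. -/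
def rhoQ (C : CartanData I) (J : Set I) (lam : I → ℤ) (hdom : ∀ j ∈ J, 0 ≤ lam j) :
    FAP I J →ₐ[KK] Module.End KK (FF I ⧸ Kr C J lam) :=
  FreeAlgebra.lift KK fun g =>
    Submodule.mapQ (Kr C J lam) (Kr C J lam) (rhoGen C J lam g) (rhoGen_Kr C J lam hdom g)

theorem rhoQ_mk (C : CartanData I) (J : Set I) (lam : I → ℤ) (hdom : ∀ j ∈ J, 0 ≤ lam j)
    (a : FAP I J) : ∀ x, rhoQ C J lam hdom a ((Kr C J lam).mkQ x) =
      (Kr C J lam).mkQ (rho C J lam a x) := by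
  induction a using FreeAlgebra.induction with
  | grade0 r => intro x; simp
  | grade1 g => intro x; simp [rhoQ, rho]
  | mul a b ha hb =>
    intro x
    rw [map_mul, map_mul, Module.End.mul_apply, Module.End.mul_apply, hb, ha]
  | add a b ha hb =>
    intro x
    rw [map_add, map_add, LinearMap.add_apply, LinearMap.add_apply, hb, ha, map_add]

theorem pserreE_eq (C : CartanData I) (J : Set I) (i j : J) :
    pserreE C J i j = serreG (C.d i) (mm C i j) (pge J i) (pge J j) := rfl

theorem pserreF_eq (C : CartanData I) (J : Set I) (i j : I) :
    pserreF C J i j = serreG (C.d i) (mm C i j) (pgf J i) (pgf J j) := rfl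

theorem rho_rel (C : CartanData I) (J : Set I) (lam : I → ℤ) (a b : FAP I J)
    (h : QRelP C J a b) (x : FF I) : rho C J lam a x - rho C J lam b x ∈ Kr C J lam := by
  have key : rho C J lam a = rho C J lam b →
      rho C J lam a x - rho C J lam b x ∈ Kr C J lam := by
    intro h; rw [h, sub_self]; exact zero_mem _
  cases h with
  | t_tinv i => apply key; simp only [map_mul, map_one, rho_t, rho_t', opT_opTinv]
  | tinv_t i => apply key; simp only [map_mul, map_one, rho_t, rho_t', opTinv_opT]
  | t_t i j => apply key; simp only [map_mul, rho_t, opT_comm C lam i j]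
  | t_tinv_comm i j => apply key; simp only [map_mul, rho_t, rho_t', opT_opTinv_comm C lam i j]
  | t_e i j => apply key; simp only [map_mul, map_smul, rho_t, rho_e, opT_opE]
  | t_f i j => apply key; simp only [map_mul, map_smul, rho_t, rho_f, opT_opF]
  | e_f i j =>
    apply key
    simp only [map_sub, map_mul, rho_e, rho_f, opE_opF]
    split_ifs
    · simp only [map_smul, map_sub, rho_t, rho_t']
    · simp
  | serre_e i j hij =>
    apply key
    rw [pserreE_eq, map_serreG, rho_e, rho_e, opE_serreE C lam _ _ hij, map_zero]
  | serre_f i j hij =>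
    rw [pserreF_eq, map_serreG, rho_f, rho_f, ← SF_mul, map_zero, LinearMap.zero_apply, sub_zero]
    exact Submodule.subset_span (Or.inl ⟨i, j, hij, _, rfl⟩)

/-- The action of the parabolic quantum group on the quotient. -/
def Phi (C : CartanData I) (J : Set I) (lam : I → ℤ) (hdom : ∀ j ∈ J, 0 ≤ lam j) :
    UqP C J →ₐ[KK] Module.End KK (FF I ⧸ Kr C J lam) :=
  RingQuot.liftAlgHom KK ⟨rhoQ C J lam hdom, by
    intro a b h
    apply LinearMap.ext
    intro x
    obtain ⟨x, rfl⟩ := (Kr C J lam).mkQ_surjective x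
    rw [rhoQ_mk, rhoQ_mk, ← sub_eq_zero, ← map_sub]
    exact (Submodule.Quotient.mk_eq_zero _).mpr (rho_rel C J lam a b h x)⟩

theorem Phi_mk (C : CartanData I) (J : Set I) (lam : I → ℤ) (hdom : ∀ j ∈ J, 0 ≤ lam j)
    (a : FAP I J) (x : FF I) : Phi C J lam hdom (pMk C J a) ((Kr C J lam).mkQ x) =
      (Kr C J lam).mkQ (rho C J lam a x) := by
  rw [Phi, pMk, RingQuot.liftAlgHom_mkAlgHom_apply, rhoQ_mk]

/-- Inclusion of the free negative half in the free algebra. -/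
def incF (J : Set I) : FF I →ₐ[KK] FAP I J := FreeAlgebra.lift KK (pgf J)

/-- The canonical map of the free negative half in the parabolic quantum group. -/
def piF (C : CartanData I) (J : Set I) : FF I →ₐ[KK] UqP C J := (pMk C J).comp (incF J)

theorem piF_ι (C : CartanData I) (J : Set I) (i : I) :
    piF C J (FreeAlgebra.ι KK i) = pF C J i := by
  simp [piF, incF, pF]

theorem rho_incF (C : CartanData I) (J : Set I) (lam : I → ℤ) (z : FF I) :
    ∀ x, rho C J lam (incF J z) x = z * x := by
  have : (rho C J lam).comp (incF J) = Algebra.lmul KK (FF I) := by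
    apply FreeAlgebra.hom_ext
    funext j
    simp [incF, rho_f, opF]
    rfl
  intro x
  exact LinearMap.congr_fun (AlgHom.congr_fun this z) x

theorem piF_mem (C : CartanData I) (J : Set I) (z : FF I) : piF C J z ∈ Pneg C J := by
  induction z using FreeAlgebra.induction with
  | grade0 r => rw [AlgHom.commutes]; exact Subalgebra.algebraMap_mem _ r
  | grade1 j => rw [piF_ι]; exact Algebra.subset_adjoin ⟨j, rfl⟩
  | mul a b ha hb => rw [map_mul]; exact mul_mem ha hb
  | add a b ha hb => rw [map_add]; exact add_mem ha hb

theorem Pneg_exists (C : CartanData I) (J : Set I) (x : UqP C J) (hx : x ∈ Pneg C J) :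
    ∃ z, piF C J z = x := by
  have : Pneg C J ≤ (piF C J).range := by
    apply Algebra.adjoin_le
    rintro _ ⟨j, rfl⟩
    exact ⟨FreeAlgebra.ι KK j, piF_ι C J j⟩
  exact this hx

theorem p_rel (C : CartanData I) (J : Set I) {a b : FAP I J} (h : QRelP C J a b) :
    pMk C J a = pMk C J b := RingQuot.mkAlgHom_rel KK h

theorem pT_piF (C : CartanData I) (J : Set I) (i : I) (z : FF I) :
    pT C J i * piF C J z = piF C J (phi (fun j => -(C.d i * C.a i j)) z) * pT C J i := by
  induction z using FreeAlgebra.induction with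
  | grade0 r => simp only [AlgHom.commutes]; exact (Algebra.commutes r _).symm
  | grade1 j =>
    rw [phi_ι, map_smul, piF_ι]
    have := p_rel C J (QRelP.t_f i j)
    simpa [pT, pF] using this
  | mul a b ha hb => rw [map_mul, map_mul, map_mul, ← mul_assoc, ha, mul_assoc, hb, mul_assoc]
  | add a b ha hb => simp only [map_add, mul_add, add_mul, ha, hb]

theorem pTT' (C : CartanData I) (J : Set I) (i : I) : pT C J i * pTinv C J i = 1 := by
  have := p_rel C J (QRelP.t_tinv i)
  simpa [pT, pTinv] using this

theorem pT'T (C : CartanData I) (J : Set I) (i : I) : pTinv C J i * pT C J i = 1 := by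
  have := p_rel C J (QRelP.tinv_t i)
  simpa [pT, pTinv] using this

theorem pT'_piF (C : CartanData I) (J : Set I) (i : I) (z : FF I) :
    pTinv C J i * piF C J z = piF C J (phi (fun j => C.d i * C.a i j) z) * pTinv C J i := by
  have h := pT_piF C J i (phi (fun j => C.d i * C.a i j) z)
  rw [phi_comp] at h
  simp only [neg_add_cancel] at h
  rw [phi_zero] at h
  calc pTinv C J i * piF C J z = pTinv C J i * (piF C J z * pT C J i) * pTinv C J i := by
        rw [mul_assoc, mul_assoc, pTT', mul_one]
    _ = _ := by rw [← h, ← mul_assoc, pT'T, one_mul]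

theorem opT_mod (C : CartanData I) (J : Set I) (lam : I → ℤ) (i : I) (z : FF I) :
    pT C J i * piF C J z - piF C J (opT C lam i z) ∈ VJideal C J lam := by
  have h : pT C J i - qpow (C.d i * lam i) • 1 ∈ VJideal C J lam :=
    Submodule.subset_span (Or.inl (Or.inr ⟨i, rfl⟩))
  have h2 := (VJideal C J lam).smul_mem (piF C J (phi (fun j => -(C.d i * C.a i j)) z)) h
  rw [smul_eq_mul, mul_sub, ← pT_piF, mul_smul_comm, mul_one, ← map_smul] at h2
  exact h2

theorem opTinv_mod (C : CartanData I) (J : Set I) (lam : I → ℤ) (i : I) (z : FF I) :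
    pTinv C J i * piF C J z - piF C J (opTinv C lam i z) ∈ VJideal C J lam := by
  have h : pTinv C J i - qpow (-(C.d i * lam i)) • 1 ∈ VJideal C J lam :=
    Submodule.subset_span (Or.inr ⟨i, rfl⟩)
  have h2 := (VJideal C J lam).smul_mem (piF C J (phi (fun j => C.d i * C.a i j) z)) h
  rw [smul_eq_mul, mul_sub, ← pT'_piF, mul_smul_comm, mul_one, ← map_smul] at h2
  exact h2

theorem VJ_smul (C : CartanData I) (J : Set I) (lam : I → ℤ) (r : KK) (x : UqP C J)
    (h : x ∈ VJideal C J lam) : r • x ∈ VJideal C J lam := by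
  rw [Algebra.smul_def]; exact (VJideal C J lam).smul_mem (algebraMap KK (UqP C J) r) h

theorem opE_mod (C : CartanData I) (J : Set I) (lam : I → ℤ) (k : J) (z : FF I) :
    pE C J k * piF C J z - piF C J (opE C lam k z) ∈ VJideal C J lam := by
  let S : Submodule KK (FF I) :=
    { carrier := {z | pE C J k * piF C J z - piF C J (opE C lam k z) ∈ VJideal C J lam}
      zero_mem' := by simp
      add_mem' := by
        intro a b ha hb
        have := (VJideal C J lam).add_mem ha hb
        change pE C J k * piF C J (a + b) - piF C J (opE C lam k (a + b)) ∈ VJideal C J lam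
        convert this using 1
        simp only [map_add, mul_add]
        abel
      smul_mem' := by
        intro r a ha
        have := VJ_smul C J lam r _ ha
        change pE C J k * piF C J (r • a) - piF C J (opE C lam k (r • a)) ∈ VJideal C J lam
        convert this using 1
        simp only [map_smul, mul_smul_comm, smul_sub] }
  apply FF_left_induction S
  · change pE C J k * piF C J 1 - piF C J (opE C lam k 1) ∈ VJideal C J lam
    rw [opE_one, map_one, map_zero, mul_one, sub_zero]
    exact Submodule.subset_span (Or.inl (Or.inl (Or.inl ⟨k, rfl⟩)))
  · intro j x hx
    change pE C J k * piF C J x - piF C J (opE C lam k x) ∈ VJideal C J lam at hx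
    change pE C J k * piF C J (FreeAlgebra.ι KK j * x) -
      piF C J (opE C lam k (FreeAlgebra.ι KK j * x)) ∈ VJideal C J lam
    have hr := p_rel C J (QRelP.e_f k j)
    rw [map_sub, map_mul, map_mul] at hr
    change pE C J k * pF C J j - pF C J j * pE C J k = _ at hr
    have h1 := (VJideal C J lam).smul_mem (pF C J j) hx
    rw [opE_ι_mul, map_mul, map_add, map_mul, piF_ι, ← mul_assoc, sub_eq_iff_eq_add.mp hr]
    by_cases h : (k : I) = j
    · rw [if_pos h, if_pos h]
      have h2 := sub_mem (opT_mod C J lam k x) (opTinv_mod C J lam k x)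
      have h3 := add_mem h1 (VJ_smul C J lam (qpow (C.d k) - qpow (-C.d (k : I)))⁻¹ _ h2)
      convert h3 using 1
      simp only [map_smul, map_sub, LinearMap.smul_apply, LinearMap.sub_apply, smul_eq_mul,
        add_mul, smul_mul_assoc, sub_mul, mul_sub, smul_sub, mul_assoc]
      change _ • (pT C J k * _) - _ • (pTinv C J k * _) + _ - _ = _
      abel
    · rw [if_neg h, if_neg h]
      convert h1 using 1
      simp [mul_sub, mul_assoc]

theorem rho_mod (C : CartanData I) (J : Set I) (lam : I → ℤ) (a : FAP I J) :
    ∀ z, pMk C J a * piF C J z - piF C J (rho C J lam a z) ∈ VJideal C J lam := by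
  induction a using FreeAlgebra.induction with
  | grade0 r =>
    intro z
    simp [Algebra.smul_def, AlgHom.commutes]
  | grade1 g =>
    intro z
    cases g with
    | e j =>
      have := opE_mod C J lam j z
      rwa [← rho_e] at this
    | f j =>
      change pMk C J (pgf J j) * _ - piF C J (rho C J lam (pgf J j) z) ∈ _
      rw [rho_f, opF, LinearMap.mulLeft_apply, map_mul, piF_ι]
      change pF C J j * _ - _ ∈ _
      rw [sub_self]
      exact zero_mem _
    | t j =>
      have := opT_mod C J lam j z
      rwa [← rho_t C J] at this
    | tinv j =>
      have := opTinv_mod C J lam j z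
      rwa [← rho_t' C J] at this
  | mul a b ha hb =>
    intro z
    have h1 := (VJideal C J lam).smul_mem (pMk C J a) (hb z)
    have h2 := add_mem h1 (ha (rho C J lam b z))
    convert h2 using 1
    rw [map_mul, map_mul, Module.End.mul_apply, smul_eq_mul, mul_sub, mul_assoc]
    abel
  | add a b ha hb =>
    intro z
    have h2 := add_mem (ha z) (hb z)
    convert h2 using 1
    rw [map_add, map_add, LinearMap.add_apply, map_add, add_mul]
    abel

/-- The vector `1` is annihilated by the ideal defining `V_J(Λ)`. -/
theorem VJ_ann (C : CartanData I) (J : Set I) (lam : I → ℤ) (hdom : ∀ j ∈ J, 0 ≤ lam j)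
    (x : UqP C J) (hx : x ∈ VJideal C J lam) :
    Phi C J lam hdom x ((Kr C J lam).mkQ 1) = 0 := by
  induction hx using Submodule.span_induction with
  | mem x hx =>
    rcases hx with ((⟨j, rfl⟩ | ⟨j, rfl⟩) | ⟨i, rfl⟩) | ⟨i, rfl⟩
    · rw [pE, Phi_mk, rho_e, opE_one, map_zero]
    · rw [← piF_ι, ← map_pow, piF, AlgHom.comp_apply, Phi_mk, rho_incF, mul_one]
      exact (Submodule.Quotient.mk_eq_zero _).mpr
        (Submodule.subset_span (Or.inr ⟨j, j.2, rfl⟩))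
    · rw [map_sub, map_smul, map_one, LinearMap.sub_apply, pT, Phi_mk, rho_t, opT_one, map_smul]
      simp
    · rw [map_sub, map_smul, map_one, LinearMap.sub_apply, pTinv, Phi_mk, rho_t', opTinv_one,
        map_smul]
      simp
  | zero => simp
  | add x y _ _ hx hy => rw [map_add, LinearMap.add_apply, hx, hy, add_zero]
  | smul a x _ hx => rw [smul_eq_mul, map_mul, Module.End.mul_apply, hx, map_zero]

theorem piF_SF (C : CartanData I) (J : Set I) (i j : I) (hij : i ≠ j) :
    piF C J (SF C i j) = 0 := by
  have := p_rel C J (QRelP.serre_f i j hij)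
  rw [pserreF_eq, map_serreG, map_zero] at this
  rw [SF, map_serreG, piF_ι, piF_ι]
  exact this

theorem piF_Kid (C : CartanData I) (J : Set I) (lam : I → ℤ) (x : FF I)
    (hx : x ∈ Kid C J lam) :
    piF C J x ∈ Submodule.span KK
      {y : UqP C J | ∃ j ∈ J, ∃ u ∈ Pneg C J, y = u * pF C J j ^ (lam j + 1).toNat} := by
  induction hx using Submodule.span_induction with
  | mem x hx =>
    rcases hx with ⟨i, j, hij, w, rfl⟩ | ⟨j, hj, rfl⟩
    · rw [map_mul, piF_SF C J i j hij, zero_mul]; exact zero_mem _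
    · rw [map_pow, piF_ι]
      exact Submodule.subset_span ⟨j, hj, 1, one_mem _, (one_mul _).symm⟩
  | zero => simp
  | add x y _ _ hx hy => rw [map_add]; exact add_mem hx hy
  | smul a x _ hx =>
    rw [smul_eq_mul, map_mul]
    generalize piF C J x = y at hx
    induction hx using Submodule.span_induction with
    | mem y hy =>
      obtain ⟨j, hj, u, hu, rfl⟩ := hy
      rw [← mul_assoc]
      exact Submodule.subset_span ⟨j, hj, _, mul_mem (piF_mem C J a) hu, rfl⟩
    | zero => simp
    | add x y _ _ hx hy => rw [mul_add]; exact add_mem hx hy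
    | smul r y _ hy => rw [mul_smul_comm]; exact Submodule.smul_mem _ _ hy

/-- Let `Λ ∈ P` be `J`-dominant (`⟨h_j, Λ⟩ ≥ 0` for all `j ∈ J`).  The canonical map
`U_q^-(𝔤)/Σ_{j∈J} U_q^-(𝔤) f_j^{⟨h_j,Λ⟩+1} → V_J(Λ)` is an isomorphism: the canonical
map from `U_q^-` to `V_J(Λ)` is surjective, and its kernel is exactly
`Σ_{j∈J} U_q^- f_j^{⟨h_j,Λ⟩+1}`. -/
theorem VJ_iso_quotient_of_negative_half
    (I : Type) [DecidableEq I] (C : CartanData I) (J : Set I) (lam : I → ℤ)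
    (hdom : ∀ j ∈ J, 0 ≤ lam j) :
    (Function.Surjective fun x : ↥(Pneg C J) =>
      (Submodule.Quotient.mk (x : UqP C J) : VJmod C J lam)) ∧
    ∀ x : UqP C J, x ∈ Pneg C J →
      ((Submodule.Quotient.mk x : VJmod C J lam) = 0 ↔
        x ∈ Submodule.span KK
          {y : UqP C J | ∃ j ∈ J, ∃ u ∈ Pneg C J, y = u * pF C J j ^ (lam j + 1).toNat}) := by
  constructor
  · intro v
    obtain ⟨x, rfl⟩ := Submodule.Quotient.mk_surjective _ v
    obtain ⟨a, rfl⟩ := RingQuot.mkAlgHom_surjective KK (QRelP C J) x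
    refine ⟨⟨piF C J (rho C J lam a 1), piF_mem C J _⟩, ?_⟩
    have h := rho_mod C J lam a 1
    rw [map_one, mul_one] at h
    exact ((Submodule.Quotient.eq _).mpr h).symm
  · intro x hx
    rw [Submodule.Quotient.mk_eq_zero]
    constructor
    · intro h
      obtain ⟨z, rfl⟩ := Pneg_exists C J x hx
      have h2 := VJ_ann C J lam hdom _ h
      rw [piF, AlgHom.comp_apply, Phi_mk, rho_incF, mul_one] at h2
      exact piF_Kid C J lam z ((Submodule.Quotient.mk_eq_zero _).mp h2)
    · intro h
      clear hx
      induction h using Submodule.span_induction with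
      | mem y hy =>
        obtain ⟨j, hj, u, hu, rfl⟩ := hy
        exact (VJideal C J lam).smul_mem u
          (Submodule.subset_span (Or.inl (Or.inl (Or.inr ⟨⟨j, hj⟩, rfl⟩))))
      | zero => exact zero_mem _
      | add x y _ _ hx hy => exact add_mem hx hy
      | smul r y _ hy => exact VJ_smul C J lam r _ hy

end
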